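/- Let V be a finite-dimensional vector space over 𝔽₂ equipped with a nondegenerate quadratic form q, let D and D' be (possibly degenerate) linear subspaces of V, and let f̲ : D → D' be a linear isomorphism satisfying q(f̲(d)) = q(d) for all d ∈ D. Then there exists a linear isometry f : V → V (a linear automorphism of V with q(f(v)) = q(v) for all v ∈ V) such that f(d) = f̲(d) for all d ∈ D. -/

import Mathlib

/-!
Let `B` be the polar form of `q`. The map is extended one vector at a time: it suffices to move
`x` to `y` by an isometry fixing a finite-dimensional subspace `H` pointwise, when `x, y ∉ H`,
`q x = q y` and `z := x - y` is orthogonal to `H`. If `q z ≠ 0`, the reflection in `z` does this.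
If `q z = 0` and `x ∉ H + ⟨z⟩`, some `u` orthogonal to `H` and `z` satisfies `B(x, u) = 1`, and the
Eichler transformation of `z` and `u` does it. Otherwise `x = h + c • z` and `y = h + (c - 1) • z`
with `h ∈ H` and `c ≠ 0, 1`; picking a singular `u` orthogonal to `H` with `B(z, u) = 1`, one goes
from `x` to `h + u` and on to `y` by two reflections, in `c • z - u` and in `(c - 1) • z - u`.
-/

namespace WittExtension

open QuadraticMap

section CommRing

variable {R M N P : Type*} [CommRing R] [AddCommGroup M] [Module R M] [AddCommGroup N] [Module R N]
  [AddCommGroup P] [Module R P]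

theorem polar_isometry_apply {Q₁ : QuadraticMap R M P} {Q₂ : QuadraticMap R N P} (f : Q₁ →qᵢ Q₂)
    (x y : M) : polar Q₂ (f x) (f y) = polar Q₁ x y := by
  simp only [polar, ← map_add, Isometry.map_app]

variable (Q : QuadraticForm R M)

theorem invOf_smul_polarBilin_self (z : M) [Invertible (Q z)] :
    (⅟(Q z) • Q.polarBilin z) z = 2 := by
  rw [LinearMap.smul_apply, polarBilin_apply_apply, polar_self, smul_comm, smul_eq_mul,
    invOf_mul_self, nsmul_eq_mul, mul_one, Nat.cast_ofNat]

/-- The reflection `v ↦ v - Q(z)⁻¹ B(z, v) z` in a vector `z` with `Q z` invertible, where `B` is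
the polar form of `Q`. Normalized by `Q z` instead of `B(z, z) = 2 Q(z)`, it makes sense in
characteristic `2`. -/
def reflection (z : M) [Invertible (Q z)] : Q.IsometryEquiv Q where
  toLinearEquiv := Module.reflection (invOf_smul_polarBilin_self Q z)
  map_app' v := by
    simp only [AddHom.toFun_eq_coe, LinearMap.coe_toAddHom, LinearEquiv.coe_coe,
      Module.reflection_apply, LinearMap.smul_apply, polarBilin_apply_apply, smul_eq_mul,
      sub_eq_add_neg, ← neg_smul, QuadraticMap.map_add Q, QuadraticMap.map_smul, polar_smul_right,
      polar_comm Q v z]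
    linear_combination ⅟(Q z) * polar Q z v ^ 2 * invOf_mul_self (Q z)

theorem reflection_apply (z v : M) [Invertible (Q z)] :
    reflection Q z v = v - (⅟(Q z) * polar Q z v) • z :=
  Module.reflection_apply v (invOf_smul_polarBilin_self Q z)

variable {Q}

theorem reflection_apply_of_polar_eq_zero {z v : M} [Invertible (Q z)] (h : polar Q z v = 0) :
    reflection Q z v = v := by
  rw [reflection_apply, h, mul_zero, zero_smul, sub_zero]

theorem polar_sub_left_of_map_eq {x y : M} (hxy : Q x = Q y) : polar Q (x - y) x = Q (x - y) := by
  have h := QuadraticMap.map_add Q (x - y) (-x)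
  rw [show x - y + -x = -y by abel, Q.map_neg, Q.map_neg, polar_neg_right] at h
  linear_combination h + hxy

theorem reflection_sub_apply {x y : M} [Invertible (Q (x - y))] (hxy : Q x = Q y) :
    reflection Q (x - y) x = y := by
  rw [reflection_apply, polar_sub_left_of_map_eq hxy, invOf_mul_self, one_smul, sub_sub_cancel]

variable (Q)

/-- The linear map `v ↦ v + B(z, v) u - B(u, v) z - Q(u) B(z, v) z`, with `B` the polar form of
`Q`, underlying the Eichler transformation of `z` and `u`. -/
def eichlerMap (z u : M) : M →ₗ[R] M :=
  LinearMap.id + (Q.polarBilin z).smulRight u - (Q.polarBilin u).smulRight z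
    - Q u • (Q.polarBilin z).smulRight z

theorem eichlerMap_apply (z u v : M) :
    eichlerMap Q z u v = v + polar Q z v • u - polar Q u v • z - (Q u * polar Q z v) • z := by
  simp [eichlerMap, mul_smul]

variable {Q}

theorem map_eichlerMap {z u : M} (hz : Q z = 0) (hzu : polar Q z u = 0) (v : M) :
    Q (eichlerMap Q z u v) = Q v := by
  have huz : polar Q u z = 0 := by rw [polar_comm, hzu]
  rw [eichlerMap_apply]
  simp only [sub_eq_add_neg, ← neg_smul, QuadraticMap.map_add Q, QuadraticMap.map_smul,
    polar_smul_right, polar_smul_left, polar_add_left, polar_self, smul_eq_mul, hz, huz,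
    polar_comm Q v]
  ring

theorem eichlerMap_neg_comp_eichlerMap {z u : M} (hz : Q z = 0) (hzu : polar Q z u = 0) :
    eichlerMap Q z (-u) ∘ₗ eichlerMap Q z u = LinearMap.id := by
  ext v
  have huz : polar Q u z = 0 := by rw [polar_comm, hzu]
  simp only [LinearMap.comp_apply, LinearMap.id_apply, eichlerMap_apply, polar_add_right,
    polar_sub_right, polar_smul_right, polar_neg_left, polar_self, QuadraticMap.map_neg, hz, hzu,
    huz, smul_eq_mul, nsmul_eq_mul]
  module

/-- The Eichler (or Siegel) transformation: the isometry attached to a singular vector `z` and a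
vector `u` orthogonal to `z`. Its inverse is the transformation attached to `z` and `-u`. -/
def eichler {z u : M} (hz : Q z = 0) (hzu : polar Q z u = 0) : Q.IsometryEquiv Q where
  toLinearEquiv := LinearEquiv.ofLinearMap (eichlerMap Q z u) (eichlerMap Q z (-u))
    (by simpa only [neg_neg] using
      eichlerMap_neg_comp_eichlerMap (u := -u) hz (by rw [polar_neg_right, hzu, neg_zero]))
    (eichlerMap_neg_comp_eichlerMap hz hzu)
  map_app' := map_eichlerMap hz hzu

theorem eichler_apply_of_polar_eq_zero {z u v : M} (hz : Q z = 0) (hzu : polar Q z u = 0)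
    (hzv : polar Q z v = 0) : eichler hz hzu v = v - polar Q u v • z :=
  (eichlerMap_apply Q z u v).trans (by rw [hzv]; module)

end CommRing

section Field

variable {K V : Type*} [Field K] [AddCommGroup V] [Module K V] {q : QuadraticForm K V}

theorem exists_polar_eq_one_of_notMem (hq : q.polarBilin.SeparatingLeft) {W : Submodule K V}
    [FiniteDimensional K W] {x : V} (hx : x ∉ W) :
    ∃ u, polar q u x = 1 ∧ ∀ w ∈ W, polar q u w = 0 := by
  obtain ⟨u, hux, huW⟩ : ∃ u, polar q u x ≠ 0 ∧ ∀ w ∈ W, polar q u w = 0 := by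
    by_contra! hcon
    have hmem : q.polarBilin x ∈ W.map q.polarBilin := by
      rw [← Subspace.dualCoannihilator_dualAnnihilator_eq (W := W.map q.polarBilin),
        Submodule.mem_dualAnnihilator]
      intro u hu
      rw [polarBilin_apply_apply, polar_comm]
      by_contra hux
      obtain ⟨w, hw, huw⟩ := hcon u hux
      exact huw ((polar_comm q u w).trans
        ((Submodule.mem_dualCoannihilator _).1 hu _ (Submodule.mem_map_of_mem hw)))
    obtain ⟨w, hw, hwx⟩ := hmem
    exact hx (LinearMap.ker_eq_bot.1 (LinearMap.separatingLeft_iff_ker_eq_bot.1 hq) hwx ▸ hw)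
  refine ⟨(polar q u x)⁻¹ • u, ?_, fun w hw ↦ ?_⟩
  · rw [polar_smul_left, smul_eq_mul, inv_mul_cancel₀ hux]
  · rw [polar_smul_left, huW w hw, smul_zero]

theorem exists_singular_polar_eq_one (hq : q.polarBilin.SeparatingLeft) {H : Submodule K V}
    [FiniteDimensional K H] {z : V} (hz : q z = 0) (hH : ∀ h ∈ H, polar q z h = 0) (hzH : z ∉ H) :
    ∃ u, q u = 0 ∧ polar q u z = 1 ∧ ∀ h ∈ H, polar q u h = 0 := by
  obtain ⟨u, huz, huH⟩ := exists_polar_eq_one_of_notMem hq hzH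
  refine ⟨u - q u • z, ?_, ?_, fun h hh ↦ ?_⟩
  · simp only [sub_eq_add_neg, ← neg_smul, QuadraticMap.map_add q, QuadraticMap.map_smul,
      polar_smul_right, huz, hz, smul_eq_mul]
    ring
  · simp [huz, hz, polar_self]
  · simp [huH h hh, hH h hh]

variable {H : Submodule K V} {x y : V}

theorem exists_isometryEquiv_fixing_of_map_sub_ne_zero (hxy : q x = q y) (hz : q (x - y) ≠ 0)
    (hH : ∀ h ∈ H, polar q (x - y) h = 0) :
    ∃ g : q.IsometryEquiv q, g x = y ∧ ∀ h ∈ H, g h = h :=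
  letI := invertibleOfNonzero hz
  ⟨reflection q (x - y), reflection_sub_apply hxy,
    fun h hh ↦ reflection_apply_of_polar_eq_zero (hH h hh)⟩

theorem exists_isometryEquiv_fixing_of_notMem_sup [FiniteDimensional K H]
    (hq : q.polarBilin.SeparatingLeft) (hxy : q x = q y) (hz : q (x - y) = 0)
    (hH : ∀ h ∈ H, polar q (x - y) h = 0) (hx : x ∉ H ⊔ K ∙ (x - y)) :
    ∃ g : q.IsometryEquiv q, g x = y ∧ ∀ h ∈ H, g h = h := by
  obtain ⟨u, hux, hu⟩ := exists_polar_eq_one_of_notMem hq hx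
  have huz : polar q (x - y) u = 0 := by
    rw [polar_comm]
    exact hu _ (Submodule.mem_sup_right (Submodule.mem_span_singleton_self _))
  refine ⟨eichler hz huz, ?_, fun h hh ↦ ?_⟩
  · rw [eichler_apply_of_polar_eq_zero hz huz ((polar_sub_left_of_map_eq hxy).trans hz), hux,
      one_smul, sub_sub_cancel]
  · rw [eichler_apply_of_polar_eq_zero hz huz (hH h hh), hu h (Submodule.mem_sup_left hh),
      zero_smul, sub_zero]

theorem exists_isometryEquiv_fixing_of_mem_sup [FiniteDimensional K H]
    (hq : q.polarBilin.SeparatingLeft) (hz : q (x - y) = 0)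
    (hH : ∀ h ∈ H, polar q (x - y) h = 0) (hx : x ∉ H) (hy : y ∉ H)
    (hx_sup : x ∈ H ⊔ K ∙ (x - y)) :
    ∃ g : q.IsometryEquiv q, g x = y ∧ ∀ h ∈ H, g h = h := by
  obtain ⟨z, rfl⟩ : ∃ z, y = x - z := ⟨x - y, by abel⟩
  rw [sub_sub_cancel] at hz hH hx_sup
  obtain ⟨h₀, hh₀, _, hw, rfl⟩ := Submodule.mem_sup.1 hx_sup
  obtain ⟨c, rfl⟩ := Submodule.mem_span_singleton.1 hw
  have hc₀ : c ≠ 0 := by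
    rintro rfl
    exact hx (by simpa using hh₀)
  have hc₁ : c - 1 ≠ 0 := by
    intro hc
    exact hy (by simpa [sub_eq_zero.1 hc] using hh₀)
  have hzH : z ∉ H := fun h ↦ hx (add_mem hh₀ (H.smul_mem c h))
  obtain ⟨u, hu, huz, huH⟩ := exists_singular_polar_eq_one hq hz hH hzH
  have exists_smul_mapsto_u {a : K} (ha : a ≠ 0) :
      ∃ g : q.IsometryEquiv q, g (a • z) = u ∧ ∀ h ∈ H, g h = h := by
    have hau : q (a • z - u) = -a := by
      simp [sub_eq_add_neg, QuadraticMap.map_add q, QuadraticMap.map_smul, hz, hu,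
        polar_comm q z u, huz]
    refine exists_isometryEquiv_fixing_of_map_sub_ne_zero ?_ (hau ▸ neg_ne_zero.2 ha) fun h hh ↦ ?_
    · rw [QuadraticMap.map_smul, hz, hu, smul_zero]
    · rw [polar_sub_left, polar_smul_left, hH h hh, huH h hh, smul_zero, sub_zero]
  obtain ⟨g₁, hg₁, hg₁H⟩ := exists_smul_mapsto_u hc₀
  obtain ⟨g₂, hg₂, hg₂H⟩ := exists_smul_mapsto_u hc₁
  refine ⟨g₁.trans g₂.symm, g₂.symm_apply_eq.2 ?_, fun h hh ↦ g₂.symm_apply_eq.2 ?_⟩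
  · calc g₁ (h₀ + c • z) = h₀ + u := by rw [map_add, hg₁, hg₁H h₀ hh₀]
      _ = g₂ (h₀ + (c - 1) • z) := by rw [map_add, hg₂, hg₂H h₀ hh₀]
      _ = g₂ (h₀ + c • z - z) := by congr 1; module
  · exact (hg₁H h hh).trans (hg₂H h hh).symm

theorem exists_isometryEquiv_fixing_of_polar_eq [FiniteDimensional K H]
    (hq : q.polarBilin.SeparatingLeft) (hxy : q x = q y)
    (hH : ∀ h ∈ H, polar q x h = polar q y h) (hx : x ∉ H) (hy : y ∉ H) :
    ∃ g : q.IsometryEquiv q, g x = y ∧ ∀ h ∈ H, g h = h := by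
  have hzH : ∀ h ∈ H, polar q (x - y) h = 0 := fun h hh ↦ by
    rw [polar_sub_left, hH h hh, sub_self]
  by_cases hz : q (x - y) = 0
  · by_cases hx_sup : x ∈ H ⊔ K ∙ (x - y)
    · exact exists_isometryEquiv_fixing_of_mem_sup hq hz hzH hx hy hx_sup
    · exact exists_isometryEquiv_fixing_of_notMem_sup hq hxy hz hzH hx_sup
  · exact exists_isometryEquiv_fixing_of_map_sub_ne_zero hxy hz hzH

variable {W : Type*} [AddCommGroup W] [Module K W] {q' : QuadraticForm K W}

theorem exists_isometryEquiv_apply_eq_on_sup_span_singleton (hq : q.polarBilin.SeparatingLeft)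
    {i j : q' →qᵢ q} (hi : Function.Injective i) (hj : Function.Injective j) {U : Submodule K W}
    [FiniteDimensional K U] {g : q.IsometryEquiv q} (hg : ∀ w ∈ U, g (i w) = j w) (x : W) :
    ∃ g' : q.IsometryEquiv q, ∀ w ∈ K ∙ x ⊔ U, g' (i w) = j w := by
  by_cases hx : x ∈ U
  · exact ⟨g, by rwa [sup_eq_right.2 ((Submodule.span_singleton_le_iff_mem x U).2 hx)]⟩
  have hgx : g (i x) ∉ U.map j.toLinearMap := by
    rintro ⟨w, hw, hwx⟩
    exact hx (hi (g.injective ((hg w hw).trans hwx)) ▸ hw)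
  have hjx : j x ∉ U.map j.toLinearMap := by
    rintro ⟨w, hw, hwx⟩
    exact hx (hj hwx ▸ hw)
  have hpolar : ∀ h ∈ U.map j.toLinearMap, polar q (g (i x)) h = polar q (j x) h := by
    rintro _ ⟨w, hw, rfl⟩
    calc polar q (g (i x)) (j w) = polar q (g (i x)) (g (i w)) := by rw [hg w hw]
      _ = polar q' x w :=
        (polar_isometry_apply g.toIsometry _ _).trans (polar_isometry_apply i _ _)
      _ = polar q (j x) (j w) := (polar_isometry_apply j _ _).symm
  obtain ⟨k, hkx, hk⟩ := exists_isometryEquiv_fixing_of_polar_eq hq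
    (by rw [g.map_app, i.map_app, j.map_app]) hpolar hgx hjx
  have hle : K ∙ x ⊔ U ≤ LinearMap.eqLocus
      ((g.trans k).toLinearEquiv.toLinearMap ∘ₗ i.toLinearMap) j.toLinearMap :=
    sup_le ((Submodule.span_singleton_le_iff_mem _ _).2 hkx) fun w hw ↦
      (congrArg k (hg w hw)).trans (hk _ (Submodule.mem_map_of_mem hw))
  exact ⟨g.trans k, hle⟩

theorem exists_isometryEquiv_comp_eq [FiniteDimensional K W] (hq : q.polarBilin.SeparatingLeft)
    {i j : q' →qᵢ q} (hi : Function.Injective i) (hj : Function.Injective j) :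
    ∃ g : q.IsometryEquiv q, ∀ w, g (i w) = j w := by
  suffices h : ∀ s : Finset W, ∃ g : q.IsometryEquiv q,
      ∀ w ∈ Submodule.span K (s : Set W), g (i w) = j w by
    obtain ⟨s, hs⟩ := Module.Finite.fg_top (R := K) (M := W)
    simpa [hs] using h s
  intro s
  classical
  induction s using Finset.induction_on with
  | empty => exact ⟨.refl q, by simp⟩
  | insert x s _ ih =>
    obtain ⟨g, hg⟩ := ih
    rw [Finset.coe_insert, Submodule.span_insert]
    exact exists_isometryEquiv_apply_eq_on_sup_span_singleton hq hi hj hg x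

end Field

end WittExtension

theorem witt_extension_degenerate_subforms_general {K V : Type*} [Field K] [AddCommGroup V]
    [Module K V] {q : QuadraticForm K V} (hq : q.polarBilin.SeparatingLeft)
    {D D' : Submodule K V} [FiniteDimensional K D] (f : D ≃ₗ[K] D')
    (hf : ∀ d : D, q (f d : V) = q (d : V)) :
    ∃ g : q.IsometryEquiv q, ∀ d : D, g (d : V) = (f d : V) :=
  WittExtension.exists_isometryEquiv_comp_eq (q' := q.comp D.subtype) hq
    (i := { D.subtype with map_app' := fun _ ↦ rfl })
    (j := { D'.subtype ∘ₗ f.toLinearMap with map_app' := hf })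
    D.injective_subtype (D'.injective_subtype.comp f.injective)

/-- **Witt's theorem for degenerate subforms over 𝔽₂** (Theorem 1.3 of the paper).
If `q` is a nondegenerate quadratic form on a finite-dimensional `𝔽₂`-vector space `V`,
`D` and `D'` are (possibly degenerate) subspaces and `f̲ : D ≃ D'` is a linear isomorphism
preserving `q`, then `f̲` extends to a linear isometry of `V`. -/
theorem witt_extension_degenerate_subforms
    (V : Type*) [AddCommGroup V] [Module (ZMod 2) V] [FiniteDimensional (ZMod 2) V]
    (q : QuadraticForm (ZMod 2) V)
    (hq : ∀ v : V, (∀ w : V, QuadraticMap.polar q v w = 0) → v = 0)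
    (D D' : Submodule (ZMod 2) V) (f : D ≃ₗ[ZMod 2] D')
    (hf : ∀ d : D, q ((f d : V)) = q (d : V)) :
    ∃ g : V ≃ₗ[ZMod 2] V, (∀ v : V, q (g v) = q v) ∧ ∀ d : D, g (d : V) = (f d : V) := by
  obtain ⟨g, hg⟩ := witt_extension_degenerate_subforms_general hq f hf
  exact ⟨g.toLinearEquiv, g.map_app, hg⟩
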